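/- Let H be a connected graph of order greater than two and let u, v be two distinct vertices of H such that N(H)_{u,v} > 1 and N(H−v)_u ≤ N(H−u)_v. For integers n1, n2 ≥ 1, let H(n1; n2) be the graph obtained from H by identifying u with a leaf of a path P_{n1} and v with a leaf of a path P_{n2}, the paths being vertex disjoint from each other and from H. Then N(H(n1; n2)) ≥ N(H(n1+n2−1; 1)), and the inequality is strict if n1 > 1 and n2 > 1. -/

import Mathlib

/-!
Put `a = n1 - 1` and `b = n2 - 1`. Counting connected sets by their trace on `V` gives
`N(H(n1; n2)) = N(H) + a N(H)_u + b N(H)_v + a b N(H)_{u,v} + a(a+1)/2 + b(b+1)/2`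
(`numCIS_attach2`), so that
`N(H(n1; n2)) - N(H(n1+n2-1; 1)) = b (N(H)_v - N(H)_u) + a b (N(H)_{u,v} - 1)`.
Moreover `N(H)_u = N(H-v)_u + N(H)_{u,v}` and symmetrically, so the hypothesis comparing
`N(H-v)_u` with `N(H-u)_v` says exactly that `N(H)_u ≤ N(H)_v`.

The formula is obtained inside one fixed ambient graph, by counting the connected sets `S` with
`K ⊆ S ⊆ A` while the region `A` grows by one pendant vertex at a time: if `y` is the only
neighbour in `A` of the new vertex `x`, then the connected sets through `x` are `{x}` and
the sets `insert x S` with `S ⊆ A` connected and `y ∈ S` (`connected_insert_pendant`).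
Iterating along a path gives `cnt_grow`, which is applied once for each of the two paths.
-/

/-- The number of connected induced subgraphs of `G`: the number of nonempty vertex subsets
inducing a connected subgraph. -/
noncomputable def numCIS {V : Type*} (G : SimpleGraph V) : ℕ :=
  Nat.card {S : Set V | S.Nonempty ∧ (G.induce S).Connected}

/-- The number of connected induced subgraphs of `G` containing the vertex `u`. -/
noncomputable def numCISat {V : Type*} (G : SimpleGraph V) (u : V) : ℕ :=
  Nat.card {S : Set V | u ∈ S ∧ (G.induce S).Connected}

/-- The number of connected induced subgraphs of `G` containing both vertices `u` and `v`. -/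
noncomputable def numCISat2 {V : Type*} (G : SimpleGraph V) (u v : V) : ℕ :=
  Nat.card {S : Set V | u ∈ S ∧ v ∈ S ∧ (G.induce S).Connected}

/-- `attach2 H u v n1 n2` is the graph `H(n1; n2)` obtained from `H` by identifying `u` with a
leaf of a path `P_{n1}` and `v` with a leaf of a path `P_{n2}` (the paths contributing `n1 - 1`,
resp. `n2 - 1`, new vertices). -/
def attach2 {V : Type*} (H : SimpleGraph V) (u v : V) (n1 n2 : ℕ) :
    SimpleGraph (V ⊕ (Fin (n1 - 1) ⊕ Fin (n2 - 1))) :=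
  SimpleGraph.fromRel (fun a b =>
    match a, b with
    | Sum.inl a, Sum.inl b => H.Adj a b
    | Sum.inl a, Sum.inr (Sum.inl i) => a = u ∧ i.val = 0
    | Sum.inr (Sum.inl i), Sum.inr (Sum.inl j) => j.val = i.val + 1
    | Sum.inl a, Sum.inr (Sum.inr i) => a = v ∧ i.val = 0
    | Sum.inr (Sum.inr i), Sum.inr (Sum.inr j) => j.val = i.val + 1
    | _, _ => False)

/-! ### Regions and counting functions -/

/-- The number of vertex sets `S` with `K ⊆ S ⊆ A` that induce a connected subgraph of `G`
(such sets are automatically nonempty). -/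
noncomputable def cnt {X : Type*} (G : SimpleGraph X) (A K : Set X) : ℕ :=
  Set.ncard {S : Set X | S ⊆ A ∧ K ⊆ S ∧ (G.induce S).Connected}

/-- The region `A` together with the vertices `p 1, …, p n`. -/
def grow {X : Type*} (A : Set X) (p : ℕ → X) : ℕ → Set X
  | 0 => A
  | n + 1 => insert (p (n + 1)) (grow A p n)

theorem mem_grow {X : Type*} (A : Set X) (p : ℕ → X) (n : ℕ) (z : X) :
    z ∈ grow A p n ↔ z ∈ A ∨ ∃ j < n, z = p (j + 1) := by
  induction n with
  | zero => simp [grow]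
  | succ n ih =>
    simp only [grow, Set.mem_insert_iff, ih, Nat.lt_succ_iff_lt_or_eq]
    grind

/-! ### Connected sets and a pendant vertex -/

/-- Reachability is preserved by a map sending each edge to an edge or to a single vertex, such as
the contraction of an edge. -/
theorem reachable_of_contract {X Y : Type*} {G : SimpleGraph X} {G' : SimpleGraph Y} (f : X → Y)
    (hf : ∀ a b, G.Adj a b → f a = f b ∨ G'.Adj (f a) (f b)) {a b : X} (h : G.Reachable a b) :
    G'.Reachable (f a) (f b) := by
  obtain ⟨w⟩ := h
  induction w with
  | nil => exact SimpleGraph.Reachable.refl _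
  | cons hab _ ih =>
    rcases hf _ _ hab with h | h
    · rw [h]; exact ih
    · exact h.reachable.trans ih

/-- Adding a pendant vertex `x` at `y` to a nonempty set `S`. The forward direction contracts the
edge `xy`. -/
theorem connected_insert_pendant {X : Type*} {G : SimpleGraph X} {S : Set X} {x y : X}
    (hx : x ∉ S) (hS : S.Nonempty) (hadj : ∀ z ∈ S, G.Adj x z ↔ z = y) :
    (G.induce (insert x S)).Connected ↔ y ∈ S ∧ (G.induce S).Connected := by
  classical
  constructor
  · intro h
    have hy : y ∈ S := by
      obtain ⟨s, hs⟩ := hS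
      obtain ⟨w⟩ := h.preconnected ⟨x, Set.mem_insert _ _⟩ ⟨s, Set.mem_insert_of_mem _ hs⟩
      cases w with
      | nil => exact absurd hs hx
      | @cons _ c _ hc _ =>
        have hc' : G.Adj x c.1 := hc
        have hcS : c.1 ∈ S := by
          rcases c.2 with h | h
          · exact absurd h.symm hc'.ne
          · exact h
        rw [← (hadj _ hcS).1 hc']
        exact hcS
    refine ⟨hy, ?_⟩
    have : Nonempty S := ⟨⟨y, hy⟩⟩
    refine ⟨fun s t => ?_⟩
    let f : ↥(insert x S) → S := fun z => if hz : z.1 ∈ S then ⟨z.1, hz⟩ else ⟨y, hy⟩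
    have hf : ∀ a b, (G.induce (insert x S)).Adj a b →
        f a = f b ∨ (G.induce S).Adj (f a) (f b) := by
      rintro ⟨a, ha⟩ ⟨b, hb⟩ hab
      have hab : G.Adj a b := hab
      rcases ha with rfl | ha <;> rcases hb with rfl | hb
      · exact absurd hab (G.loopless.irrefl _)
      · left
        have := (hadj _ hb).1 hab
        simp [f, hx, this]
      · left
        have := (hadj _ ha).1 hab.symm
        simp [f, hx, this]
      · right
        simpa [f, ha, hb] using hab
    have := reachable_of_contract f hf (h.preconnected ⟨s.1, Set.mem_insert_of_mem _ s.2⟩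
      ⟨t.1, Set.mem_insert_of_mem _ t.2⟩)
    simpa [f] using this
  · rintro ⟨hy, h⟩
    have key : ∀ z : ↥(insert x S), (G.induce (insert x S)).Reachable ⟨y, Or.inr hy⟩ z := by
      rintro ⟨z, rfl | hz⟩
      · refine SimpleGraph.Adj.reachable ?_
        exact ((hadj y hy).2 rfl).symm
      · exact reachable_of_contract (G' := G.induce (insert x S))
          (fun s : S => (⟨s.1, Or.inr s.2⟩ : ↥(insert x S)))
          (fun a b hab => Or.inr hab) (h.preconnected ⟨y, hy⟩ ⟨z, hz⟩)
    have : Nonempty ↥(insert x S) := ⟨⟨y, Or.inr hy⟩⟩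
    exact ⟨fun s t => (key s).symm.trans (key t)⟩

theorem connected_induce_singleton {X : Type*} (G : SimpleGraph X) (x : X) :
    (G.induce {x}).Connected := by
  have : Nonempty ↥({x} : Set X) := ⟨⟨x, rfl⟩⟩
  refine ⟨fun s t => ?_⟩
  rw [Subsingleton.elim s t]

theorem not_connected_induce_empty {X : Type*} (G : SimpleGraph X) :
    ¬ (G.induce (∅ : Set X)).Connected := fun h => by
  obtain ⟨⟨_, h⟩⟩ := h.nonempty
  exact h

/-! ### Counting along a growing path -/

/-- A connected set through the pendant vertex `x` is either `{x}` (counted only when `K` is empty)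
or a connected subset of `A` through `y` enlarged by `x`. -/
theorem cnt_pendant_mem {X : Type*} [Finite X] (G : SimpleGraph X) {A K : Set X} {x y : X}
    (hx : x ∉ A) (hK : K ⊆ A) (hadj : ∀ z ∈ A, G.Adj x z ↔ z = y) [Decidable (K = ∅)] :
    cnt G (insert x A) (insert x K) = cnt G A (insert y K) + if K = ∅ then 1 else 0 := by
  have hxK : x ∉ K := fun h => hx (hK h)
  have hinj : Set.InjOn (fun S : Set X => insert x S) {S | S ⊆ A} := by
    intro S hS T hT h
    have hxS : x ∉ S := fun h => hx (hS h)
    have hxT : x ∉ T := fun h => hx (hT h)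
    ext z
    have := Set.ext_iff.1 h z
    simp only [Set.mem_insert_iff] at this
    grind
  have heq : {S : Set X | S ⊆ insert x A ∧ insert x K ⊆ S ∧ (G.induce S).Connected} =
      (fun S : Set X => insert x S) ''
        ({S | S ⊆ A ∧ insert y K ⊆ S ∧ (G.induce S).Connected} ∪ {S | S = ∅ ∧ K = ∅}) := by
    ext S
    constructor
    · rintro ⟨hSA, hKS, hc⟩
      have hxS : x ∈ S := hKS (Set.mem_insert _ _)
      have hins : insert x (S \ {x}) = S := by simp [Set.insert_eq_of_mem hxS]
      have hSA' : S \ {x} ⊆ A := by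
        rintro z ⟨hz, hzx⟩
        exact (hSA hz).resolve_left hzx
      have hKS' : K ⊆ S \ {x} := fun z hz =>
        ⟨hKS (Or.inr hz), fun h => hxK (by rwa [← Set.mem_singleton_iff.1 h])⟩
      refine ⟨S \ {x}, ?_, hins⟩
      rcases Set.eq_empty_or_nonempty (S \ {x}) with he | hne
      · right
        exact ⟨he, Set.subset_empty_iff.1 (he ▸ hKS')⟩
      · left
        rw [← hins, connected_insert_pendant (y := y) (by simp) hne
          (fun z hz => hadj z (hSA' hz))] at hc
        exact ⟨hSA', Set.insert_subset hc.1 hKS', hc.2⟩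
    · rintro ⟨T, ⟨hTA, hKT, hc⟩ | ⟨rfl, rfl⟩, rfl⟩
      · have hyT : y ∈ T := hKT (Set.mem_insert _ _)
        refine ⟨Set.insert_subset_insert hTA,
          Set.insert_subset_insert ((Set.subset_insert _ _).trans hKT), ?_⟩
        exact (connected_insert_pendant (fun h => hx (hTA h)) ⟨y, hyT⟩
          (fun z hz => hadj z (hTA hz))).2 ⟨hyT, hc⟩
      · refine ⟨Set.insert_subset_insert (Set.empty_subset _), subset_rfl, ?_⟩
        have he : (insert x ∅ : Set X) = {x} := insert_empty_eq x
        change (G.induce (insert x ∅ : Set X)).Connected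
        exact he ▸ connected_induce_singleton G x
  unfold cnt
  rw [heq, Set.InjOn.ncard_image, Set.ncard_union_eq]
  · congr 1
    split_ifs with h <;> simp [h]
  · rw [Set.disjoint_left]
    rintro S ⟨_, _, hc⟩ ⟨rfl, _⟩
    exact not_connected_induce_empty G hc
  · refine hinj.mono ?_
    rintro S (h | ⟨rfl, _⟩)
    · exact h.1
    · exact Set.empty_subset _

/-- Connected sets in `insert x A` are split according to whether they contain `x`. -/
theorem cnt_insert {X : Type*} [Finite X] (G : SimpleGraph X) {A K : Set X} {x : X}
    (hx : x ∉ A) : cnt G (insert x A) K = cnt G A K + cnt G (insert x A) (insert x K) := by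
  unfold cnt
  rw [← Set.ncard_union_eq]
  · congr 1
    ext S
    simp only [Set.mem_union, Set.mem_ofPred_eq, Set.insert_subset_iff]
    constructor
    · rintro ⟨h1, h2, h3⟩
      by_cases hxS : x ∈ S
      · exact Or.inr ⟨h1, ⟨hxS, h2⟩, h3⟩
      · exact Or.inl ⟨(Set.subset_insert_iff_of_notMem hxS).1 h1, h2, h3⟩
    · rintro (⟨h1, h2, h3⟩ | ⟨h1, ⟨_, h2⟩, h3⟩)
      · exact ⟨h1.trans (Set.subset_insert _ _), h2, h3⟩
      · exact ⟨h1, h2, h3⟩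
  · rw [Set.disjoint_left]
    rintro S ⟨h1, _, _⟩ ⟨_, h2, _⟩
    exact hx (h1 (h2 (Set.mem_insert _ _)))

/-- Attaching the path `p 0, p 1, …, p n` to the region `A` at its vertex `p 0`. The second
equation, on the sets through the current end `p n`, is what makes the induction work. -/
theorem cnt_grow {X : Type*} [Finite X] (G : SimpleGraph X) {A K : Set X} (p : ℕ → X)
    (hK : K ⊆ A) (n : ℕ) (hnot : ∀ i < n, p (i + 1) ∉ grow A p i)
    (hadj : ∀ i < n, ∀ z ∈ grow A p i, G.Adj (p (i + 1)) z ↔ z = p i) [Decidable (K = ∅)] :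
    cnt G (grow A p n) K = cnt G A K + n * cnt G A (insert (p 0) K) +
        (if K = ∅ then ∑ i ∈ Finset.range (n + 1), i else 0) ∧
      cnt G (grow A p n) (insert (p n) K) =
        cnt G A (insert (p 0) K) + if K = ∅ then n else 0 := by
  induction n with
  | zero => simp [grow]
  | succ n ih =>
    obtain ⟨ih1, ih2⟩ := ih (fun i hi => hnot i (by omega)) (fun i hi => hadj i (by omega))
    have hKg : K ⊆ grow A p n := fun z hz => (mem_grow A p n z).2 (Or.inl (hK hz))
    have h1 := cnt_pendant_mem G (hnot n (by omega)) hKg (hadj n (by omega))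
    have h2 := cnt_insert G (K := K) (hnot n (by omega))
    rw [Finset.sum_range_succ]
    simp only [grow]
    rw [h2, h1, ih1, ih2]
    split_ifs <;> constructor <;> ring

/-! ### Comparison with the counts in `H` and in its vertex-deleted subgraphs -/

/-- Counting inside the image of an embedded graph is counting in that graph. -/
theorem cnt_range {X Y : Type*} {H : SimpleGraph X} {G : SimpleGraph Y} (f : H ↪g G)
    (K : Set X) : cnt G (Set.range f) (f '' K) = cnt H Set.univ K := by
  have hcon : ∀ S : Set X, (G.induce (f '' S)).Connected ↔ (H.induce S).Connected := by
    intro S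
    let e : H.induce S ≃g G.induce (f '' S) :=
      { toEquiv := Equiv.Set.image f S f.injective
        map_rel_iff' := by
          intro a b
          exact f.map_adj_iff }
    exact e.connected_iff.symm
  unfold cnt
  rw [← Set.ncard_image_of_injective _ f.injective.image_injective]
  congr 1
  ext S
  constructor
  · rintro ⟨h1, h2, h3⟩
    obtain ⟨T, rfl⟩ := Set.subset_range_iff_exists_image_eq.1 h1
    exact ⟨T, ⟨Set.subset_univ _, (Set.image_subset_image_iff f.injective).1 h2, (hcon T).1 h3⟩,
      rfl⟩
  · rintro ⟨T, ⟨_, h2, h3⟩, rfl⟩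
    exact ⟨Set.image_subset_range _ _, Set.image_mono h2, (hcon T).2 h3⟩

theorem numCIS_eq {X : Type*} (G : SimpleGraph X) : numCIS G = cnt G Set.univ ∅ := by
  unfold numCIS cnt
  rw [Nat.card_coe_set_eq]
  congr 1
  ext S
  simp only [Set.mem_ofPred_eq, Set.subset_univ, Set.empty_subset, true_and, and_iff_right_iff_imp]
  intro h
  obtain ⟨s⟩ := h.nonempty
  exact ⟨s.1, s.2⟩

theorem numCISat_eq {X : Type*} (G : SimpleGraph X) (u : X) :
    numCISat G u = cnt G Set.univ {u} := by
  unfold numCISat cnt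
  rw [Nat.card_coe_set_eq]
  simp

theorem numCISat2_eq {X : Type*} (G : SimpleGraph X) (u v : X) :
    numCISat2 G u v = cnt G Set.univ {u, v} := by
  unfold numCISat2 cnt
  rw [Nat.card_coe_set_eq]
  simp [Set.insert_subset_iff, and_assoc]

/-- The connected sets through `u` either avoid `v`, and live in `G - v`, or contain both. -/
theorem numCISat_split {X : Type*} [Finite X] (G : SimpleGraph X) (u v : X) (h : u ≠ v) :
    numCISat G u = numCISat (G.induce {x | x ≠ v}) ⟨u, h⟩ + numCISat2 G u v := by
  have hr := cnt_range (SimpleGraph.Embedding.induce (G := G) {x | x ≠ v}) {⟨u, h⟩}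
  have h1 : Set.range (SimpleGraph.Embedding.induce (G := G) {x | x ≠ v}) = {x | x ≠ v} := by
    ext z
    simp [SimpleGraph.Embedding.induce]
  have h2 : insert v {x | x ≠ v} = (Set.univ : Set X) := by
    ext z
    simp [em]
  have h3 := cnt_insert G (K := {u}) (x := v) (A := {x | x ≠ v}) (by simp)
  rw [h2] at h3
  rw [h1, Set.image_singleton] at hr
  rw [numCISat_eq, numCISat_eq, numCISat2_eq, h3, ← hr, Set.pair_comm u v]
  rfl

/-! ### The graph `H(n1; n2)` -/

/-- The vertices of the first path of `attach2 H u v n1 n2`, starting from `u`; indices past the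
end of the path are sent to `u` and play no role. -/
def leftPath {V : Type*} (u : V) (a b : ℕ) : ℕ → V ⊕ (Fin a ⊕ Fin b)
  | 0 => Sum.inl u
  | i + 1 => if h : i < a then Sum.inr (Sum.inl ⟨i, h⟩) else Sum.inl u

/-- The vertices of the second path of `attach2 H u v n1 n2`, starting from `v`; indices past the
end of the path are sent to `v` and play no role. -/
def rightPath {V : Type*} (v : V) (a b : ℕ) : ℕ → V ⊕ (Fin a ⊕ Fin b)
  | 0 => Sum.inl v
  | i + 1 => if h : i < b then Sum.inr (Sum.inr ⟨i, h⟩) else Sum.inl v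

/-- The number of connected induced subgraphs of `H(n1; n2)`. The sums are the triangular numbers
counting the connected sets contained in the new vertices of one path. -/
theorem numCIS_attach2 {V : Type*} [Finite V] (H : SimpleGraph V) (u v : V) (n1 n2 : ℕ) :
    numCIS (attach2 H u v n1 n2) =
      numCIS H + (n1 - 1) * numCISat H u + (n2 - 1) * numCISat H v +
        (n1 - 1) * (n2 - 1) * numCISat2 H u v +
        ∑ i ∈ Finset.range (n1 - 1 + 1), i + ∑ i ∈ Finset.range (n2 - 1 + 1), i := by
  classical
  set G := attach2 H u v n1 n2 with hG
  let f : H ↪g G :=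
    { toFun := Sum.inl
      inj' := Sum.inl_injective
      map_rel_iff' := by
        intro a b
        simp only [hG, attach2, SimpleGraph.fromRel_adj, Function.Embedding.coeFn_mk]
        constructor
        · rintro ⟨_, h | h⟩
          · exact h
          · exact h.symm
        · intro h
          exact ⟨fun e => h.ne (Sum.inl_injective e), Or.inl h⟩ }
  have hf : ∀ x, f x = Sum.inl x := fun _ => rfl
  set p := leftPath (V := V) u (n1 - 1) (n2 - 1) with hp
  set q := rightPath (V := V) v (n1 - 1) (n2 - 1) with hq
  have hp1 : ∀ i (h : i < n1 - 1), p (i + 1) = Sum.inr (Sum.inl ⟨i, h⟩) := by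
    intro i h
    simp [hp, leftPath, h]
  have hq1 : ∀ i (h : i < n2 - 1), q (i + 1) = Sum.inr (Sum.inr ⟨i, h⟩) := by
    intro i h
    simp [hq, rightPath, h]
  have hp0 : p 0 = Sum.inl u := rfl
  have hq0 : q 0 = Sum.inl v := rfl
  set A0 : Set (V ⊕ (Fin (n1 - 1) ⊕ Fin (n2 - 1))) := Set.range f with hA0
  set A1 := grow A0 p (n1 - 1) with hA1
  have hpnot : ∀ i < n1 - 1, p (i + 1) ∉ grow A0 p i := by
    intro i hi
    rw [mem_grow, hp1 i hi]
    rintro (⟨x, hx⟩ | ⟨j, hj, h⟩)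
    · rw [hf] at hx; cases hx
    · rw [hp1 j (by omega)] at h
      simp at h
      omega
  have hpadj : ∀ i < n1 - 1, ∀ z ∈ grow A0 p i, G.Adj (p (i + 1)) z ↔ z = p i := by
    intro i hi z hz
    rw [mem_grow] at hz
    rw [hp1 i hi]
    rcases hz with ⟨x, rfl⟩ | ⟨j, hj, rfl⟩
    · rw [hf]
      cases i with
      | zero => simp [hG, attach2, hp0]
      | succ i => simp [hG, attach2, hp1 i (by omega)]
    · rw [hp1 j (by omega)]
      cases i with
      | zero => omega
      | succ i =>
        rw [hp1 i (by omega)]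
        simp [hG, attach2]
        omega
  have hqnot : ∀ i < n2 - 1, q (i + 1) ∉ grow A1 q i := by
    intro i hi
    rw [mem_grow, hA1, mem_grow, hq1 i hi]
    rintro ((⟨x, hx⟩ | ⟨j, hj, h⟩) | ⟨j, hj, h⟩)
    · rw [hf] at hx; cases hx
    · rw [hp1 j (by omega)] at h
      simp at h
    · rw [hq1 j (by omega)] at h
      simp at h
      omega
  have hqadj : ∀ i < n2 - 1, ∀ z ∈ grow A1 q i, G.Adj (q (i + 1)) z ↔ z = q i := by
    intro i hi z hz
    rw [mem_grow, hA1, mem_grow] at hz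
    rw [hq1 i hi]
    rcases hz with (⟨x, rfl⟩ | ⟨j, hj, rfl⟩) | ⟨j, hj, rfl⟩
    · rw [hf]
      cases i with
      | zero => simp [hG, attach2, hq0]
      | succ i => simp [hG, attach2, hq1 i (by omega)]
    · rw [hp1 j (by omega)]
      cases i with
      | zero => simp [hG, attach2, hq0]
      | succ i => simp [hG, attach2, hq1 i (by omega)]
    · rw [hq1 j (by omega)]
      cases i with
      | zero => omega
      | succ i =>
        rw [hq1 i (by omega)]
        simp [hG, attach2]
        omega
  have huniv : grow A1 q (n2 - 1) = Set.univ := by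
    ext z
    simp only [mem_grow, hA1, Set.mem_univ, iff_true]
    rcases z with x | i | i
    · exact Or.inl (Or.inl ⟨x, rfl⟩)
    · exact Or.inl (Or.inr ⟨i, i.2, (hp1 i i.2).symm⟩)
    · exact Or.inr ⟨i, i.2, (hq1 i i.2).symm⟩
  have hv : ({Sum.inl v} : Set (V ⊕ (Fin (n1 - 1) ⊕ Fin (n2 - 1)))) ⊆ A0 := by
    rintro _ rfl
    exact ⟨v, rfl⟩
  have e1 := (cnt_grow G (A := A1) (K := ∅) q (Set.empty_subset _) (n2 - 1) hqnot hqadj).1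
  have e2 := (cnt_grow G (A := A0) (K := ∅) p (Set.empty_subset _) (n1 - 1) hpnot hpadj).1
  have e3 := (cnt_grow G (A := A0) (K := {Sum.inl v}) p hv (n1 - 1) hpnot hpadj).1
  have r0 := cnt_range f ∅
  have r1 := cnt_range f {u}
  have r2 := cnt_range f {v}
  have r3 := cnt_range f {u, v}
  simp only [Set.image_empty, Set.image_singleton, Set.image_insert_eq, hf, ← hA0] at r0 r1 r2 r3
  rw [huniv, hq0] at e1
  rw [← hA1, hp0] at e2 e3
  simp only [insert_empty_eq, if_true, Set.singleton_ne_empty, if_false] at e1 e2 e3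
  rw [numCIS_eq, numCIS_eq, numCISat_eq, numCISat_eq, numCISat2_eq, e1, e2, e3, r0, r1, r2, r3]
  ring

theorem stmt_19 {V : Type*} [Fintype V] (H : SimpleGraph V) (hcard : 2 < Fintype.card V)
    (hconn : H.Connected) (u v : V) (huv : u ≠ v)
    (h1 : 1 < numCISat2 H u v)
    (h2 : numCISat (H.induce {x | x ≠ v}) ⟨u, huv⟩ ≤
          numCISat (H.induce {x | x ≠ u}) ⟨v, huv.symm⟩)
    (n1 n2 : ℕ) (hn1 : 1 ≤ n1) (hn2 : 1 ≤ n2) :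
    numCIS (attach2 H u v (n1 + n2 - 1) 1) ≤ numCIS (attach2 H u v n1 n2) ∧
    (1 < n1 → 1 < n2 →
      numCIS (attach2 H u v (n1 + n2 - 1) 1) < numCIS (attach2 H u v n1 n2)) := by
  have hu := numCISat_split H u v huv
  have hv := numCISat_split H v u huv.symm
  have hc : numCISat2 H v u = numCISat2 H u v := by
    rw [numCISat2_eq, numCISat2_eq, Set.pair_comm]
  -- After cancelling the common term `N(H)_{u,v}`, this is the hypothesis `h2`.
  have hle : numCISat H u ≤ numCISat H v := by omega
  obtain ⟨a, rfl⟩ : ∃ a, n1 = a + 1 := ⟨n1 - 1, by omega⟩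
  obtain ⟨b, rfl⟩ : ∃ b, n2 = b + 1 := ⟨n2 - 1, by omega⟩
  obtain ⟨d, hd⟩ := Nat.exists_eq_add_of_le hle
  obtain ⟨e, he⟩ := Nat.exists_eq_add_of_lt h1
  have htri : ∀ m n : ℕ, ∑ i ∈ Finset.range (m + n + 1), i =
      ∑ i ∈ Finset.range (m + 1), i + ∑ i ∈ Finset.range (n + 1), i + m * n := by
    intro m n
    induction n with
    | zero => simp
    | succ n ih =>
      rw [← add_assoc, Finset.sum_range_succ, ih, Finset.sum_range_succ _ (n + 1)]
      ring
  have key : numCIS (attach2 H u v (a + 1) (b + 1)) =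
      numCIS (attach2 H u v (a + 1 + (b + 1) - 1) 1) + (b * d + a * b * (e + 1)) := by
    rw [numCIS_attach2, numCIS_attach2]
    have s : a + 1 + (b + 1) - 1 - 1 = a + b := by omega
    rw [s, htri a b, hd, he]
    simp
    ring
  refine ⟨by omega, fun ha hb => ?_⟩
  have : 0 < a * b * (e + 1) := by
    have : 0 < a := by omega
    have : 0 < b := by omega
    positivity
  omega
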